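/- arXiv:2202.04097 — 3 statements merged into one kernel-verified Lean document; each statement's English description precedes it below -/
import Mathlib

section
/- Let d, m ≥ 1 and let A ∈ ℝ^{d×d}, B ∈ ℝ^{d×m} satisfy the Kalman rank condition. Consider the Hamiltonian matrix 𝕳 ∈ ℝ^{2d×2d} given in block form by 𝕳 = [[A, BBᵀ],[I_d, −Aᵀ]]. Then 𝕳 is hyperbolic: every complex eigenvalue μ of 𝕳 (i.e. every root of its characteristic polynomial over ℂ) satisfies Re(μ) ≠ 0. Moreover, if μ is an eigenvalue of 𝕳, then so is −μ. -/
open Matrix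

noncomputable section

/-- The Kalman controllability matrix `[B, AB, …, A^{d−1}B]`. -/
noncomputable def kalmanMatrix {d m : ℕ} (A : Matrix (Fin d) (Fin d) ℝ)
    (B : Matrix (Fin d) (Fin m) ℝ) : Matrix (Fin d) (Fin d × Fin m) ℝ :=
  fun i p => (A ^ (p.1 : ℕ) * B) i p.2

/-- The Kalman rank condition: `rank [B, AB, …, A^{d−1}B] = d`. -/
def KalmanRankCondition {d m : ℕ} (A : Matrix (Fin d) (Fin d) ℝ)
    (B : Matrix (Fin d) (Fin m) ℝ) : Prop :=
  (kalmanMatrix A B).rank = d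

/-- `μ ∈ ℂ` is an eigenvalue of a real square matrix `M` if it is a root of the
characteristic polynomial of the complexification of `M`. -/
def Matrix.IsComplexEigenvalue {n : Type*} [Fintype n] [DecidableEq n]
    (M : Matrix n n ℝ) (μ : ℂ) : Prop :=
  ((M.map (Complex.ofReal)).charpoly).IsRoot μ

/-- The Hamiltonian matrix `𝕳 = [[A, BBᵀ],[I_d, −Aᵀ]] ∈ ℝ^{2d×2d}` of the LQ
optimality system. -/
noncomputable def hamiltonianMatrix {d m : ℕ} (A : Matrix (Fin d) (Fin d) ℝ)
    (B : Matrix (Fin d) (Fin m) ℝ) : Matrix (Fin d ⊕ Fin d) (Fin d ⊕ Fin d) ℝ :=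
  Matrix.fromBlocks A (B * Bᵀ) 1 (-Aᵀ)

open scoped ComplexOrder in
theorem ham_energy {d m : ℕ} (A : Matrix (Fin d) (Fin d) ℂ) (B : Matrix (Fin d) (Fin m) ℂ)
    (hA : Aᴴ = Aᵀ) (hB : Bᴴ = Bᵀ) (μ : ℂ) (hμ : star μ = -μ) (x y : Fin d → ℂ)
    (h1 : A *ᵥ x + (B * Bᵀ) *ᵥ y = μ • x) (h2 : x - Aᵀ *ᵥ y = μ • y) :
    x = 0 ∧ Bᵀ *ᵥ y = 0 := by
  have e1 : star y ⬝ᵥ (A *ᵥ x) = star x ⬝ᵥ x + μ * (star y ⬝ᵥ x) := by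
    have h3 : Aᵀ *ᵥ y = x - μ • y := by rw [← h2]; abel
    have h4 : star y ᵥ* A = star (Aᵀ *ᵥ y) := by
      rw [← hA, star_mulVec, conjTranspose_conjTranspose]
    rw [dotProduct_mulVec, h4, h3, star_sub, star_smul, hμ, sub_dotProduct, smul_dotProduct]
    simp
  have e2 : star y ⬝ᵥ ((B * Bᵀ) *ᵥ y) = star (Bᵀ *ᵥ y) ⬝ᵥ (Bᵀ *ᵥ y) := by
    have h4 : star y ᵥ* B = star (Bᵀ *ᵥ y) := by
      rw [← hB, star_mulVec, conjTranspose_conjTranspose]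
    rw [← mulVec_mulVec, dotProduct_mulVec, h4]
  have e3 := congrArg (fun z => star y ⬝ᵥ z) h1
  simp only [dotProduct_add, dotProduct_smul, smul_eq_mul] at e3
  rw [e1, e2] at e3
  have e4 : star x ⬝ᵥ x + star (Bᵀ *ᵥ y) ⬝ᵥ (Bᵀ *ᵥ y) = 0 := by
    linear_combination e3
  have p1 := dotProduct_star_self_nonneg x
  have p2 := dotProduct_star_self_nonneg (Bᵀ *ᵥ y)
  obtain ⟨q1, q2⟩ := (add_eq_zero_iff_of_nonneg p1 p2).1 e4
  exact ⟨dotProduct_star_self_eq_zero.1 q1,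
    dotProduct_star_self_eq_zero.1 q2⟩

theorem kalman_ker {d m : ℕ} (A : Matrix (Fin d) (Fin d) ℝ)
    (B : Matrix (Fin d) (Fin m) ℝ) (hK : KalmanRankCondition A B) (u : Fin d → ℝ)
    (hu : u ᵥ* kalmanMatrix A B = 0) : u = 0 := by
  have hl : LinearIndependent ℝ (kalmanMatrix A B).row := by
    rw [linearIndependent_iff_card_eq_finrank_span, Set.finrank, ← Matrix.rank_eq_finrank_span_row]
    unfold KalmanRankCondition at hK
    simp [hK]
  have hinj := Matrix.vecMul_injective_iff.2 hl
  exact hinj (by simpa using hu)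

theorem kalman_complex {d m : ℕ} (A : Matrix (Fin d) (Fin d) ℝ)
    (B : Matrix (Fin d) (Fin m) ℝ) (hK : KalmanRankCondition A B) (y : Fin d → ℂ) (c : ℂ)
    (hA : y ᵥ* A.map Complex.ofReal = c • y) (hB : y ᵥ* B.map Complex.ofReal = 0) : y = 0 := by
  have hp : ∀ k : ℕ, y ᵥ* (A.map Complex.ofReal) ^ k = c ^ k • y := by
    intro k
    induction k with
    | zero => simp
    | succ k ih => rw [pow_succ, ← vecMul_vecMul, ih, smul_vecMul, hA, smul_smul, pow_succ]
  have hk : ∀ k : ℕ, y ᵥ* ((A ^ k * B).map Complex.ofReal) = 0 := by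
    intro k
    have : (A ^ k * B).map Complex.ofReal
        = (A.map Complex.ofReal) ^ k * B.map Complex.ofReal := by
      have h1 := Matrix.map_mul (L := A ^ k) (M := B) (f := Complex.ofRealHom)
      have h2 := Matrix.map_pow A Complex.ofRealHom k
      rw [h2] at h1
      exact h1
    rw [this, ← vecMul_vecMul, hp, smul_vecMul, hB, smul_zero]
  have key : ∀ p : Fin d × Fin m, ∑ i, y i * ((kalmanMatrix A B i p : ℝ) : ℂ) = 0 := fun p =>
    congrFun (hk p.1) p.2
  have hre : (fun i => (y i).re) = 0 := by
    apply kalman_ker A B hK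
    ext p
    have := congrArg Complex.re (key p)
    simpa [vecMul, dotProduct] using this
  have him : (fun i => (y i).im) = 0 := by
    apply kalman_ker A B hK
    ext p
    have := congrArg Complex.im (key p)
    simpa [vecMul, dotProduct] using this
  ext i
  exact Complex.ext (congrFun hre i) (congrFun him i)

theorem ham_map {d m : ℕ} (A : Matrix (Fin d) (Fin d) ℝ) (B : Matrix (Fin d) (Fin m) ℝ) :
    (hamiltonianMatrix A B).map Complex.ofReal =
      fromBlocks (A.map Complex.ofReal) (B.map Complex.ofReal * (B.map Complex.ofReal)ᵀ) 1
        (-(A.map Complex.ofReal)ᵀ) := by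
  unfold hamiltonianMatrix
  rw [fromBlocks_map]
  congr 1
  · exact Matrix.map_mul (f := Complex.ofRealHom)
  · exact Matrix.map_one _ (by simp) (by simp)
  · ext i j; simp

theorem ham_symm {d : ℕ} (A Q : Matrix (Fin d) (Fin d) ℂ) (hQ : Qᵀ = Q) (μ : ℂ)
    (h : (scalar (Fin d ⊕ Fin d) μ - fromBlocks A Q 1 (-Aᵀ)).det = 0) :
    (scalar (Fin d ⊕ Fin d) (-μ) - fromBlocks A Q 1 (-Aᵀ)).det = 0 := by
  have hs : ∀ t : ℂ, scalar (Fin d ⊕ Fin d) t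
      = fromBlocks (scalar (Fin d) t) 0 0 (scalar (Fin d) t) := by
    intro t
    ext (i | i) (j | j) <;> simp [diagonal_apply]
  have hJ : J (Fin d) ℂ * (scalar (Fin d ⊕ Fin d) μ - fromBlocks A Q 1 (-Aᵀ))
      = -(scalar (Fin d ⊕ Fin d) (-μ) - fromBlocks A Q 1 (-Aᵀ))ᵀ * J (Fin d) ℂ := by
    rw [hs, hs, J, sub_eq_add_neg, sub_eq_add_neg, fromBlocks_neg, fromBlocks_add, fromBlocks_add, fromBlocks_transpose, fromBlocks_neg,
      fromBlocks_multiply, fromBlocks_multiply]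
    congr 1 <;> simp [hQ, sub_eq_add_neg, add_comm]
  have := congrArg det hJ
  rw [det_mul, det_mul, h, mul_zero, det_neg, det_transpose] at this
  have hu := (isUnit_det_J (Fin d) ℂ).ne_zero
  have h1 : ((-1 : ℂ) ^ Fintype.card (Fin d ⊕ Fin d)) ≠ 0 := by simp
  simpa [hu, h1] using this.symm

/-- under the Kalman rank condition, the Hamiltonian matrix
`𝕳 = [[A, BBᵀ],[I_d, −Aᵀ]]` is hyperbolic: every complex eigenvalue `μ` of `𝕳`
satisfies `Re(μ) ≠ 0`; moreover if `μ` is an eigenvalue of `𝕳`, so is `−μ`. -/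
theorem hamiltonian_hyperbolic {d m : ℕ} (hd : 1 ≤ d) (hm : 1 ≤ m)
    (A : Matrix (Fin d) (Fin d) ℝ) (B : Matrix (Fin d) (Fin m) ℝ)
    (hK : KalmanRankCondition A B) :
    (∀ μ : ℂ, (hamiltonianMatrix A B).IsComplexEigenvalue μ → μ.re ≠ 0) ∧
    (∀ μ : ℂ, (hamiltonianMatrix A B).IsComplexEigenvalue μ →
      (hamiltonianMatrix A B).IsComplexEigenvalue (-μ)) := by
  have conj : ∀ {k l : ℕ} (M : Matrix (Fin k) (Fin l) ℝ),
      (M.map Complex.ofReal)ᴴ = (M.map Complex.ofReal)ᵀ := by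
    intro k l M
    ext i j
    simp
  refine ⟨fun μ hμ hre => ?_, fun μ hμ => ?_⟩
  · unfold Matrix.IsComplexEigenvalue at hμ
    rw [Polynomial.IsRoot.def, eval_charpoly, ham_map] at hμ
    obtain ⟨v, hv0, hv⟩ := exists_mulVec_eq_zero_iff.2 hμ
    have hst : star μ = -μ := by
      apply Complex.ext <;> simp [hre]
    have hv' : fromBlocks (A.map Complex.ofReal)
        (B.map Complex.ofReal * (B.map Complex.ofReal)ᵀ) 1
        (-(A.map Complex.ofReal)ᵀ) *ᵥ v = μ • v := by
      rw [sub_mulVec, sub_eq_zero] at hv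
      rw [← hv]
      ext i
      simp [mulVec_diagonal]
    rw [fromBlocks_mulVec] at hv'
    have h1 : A.map Complex.ofReal *ᵥ (v ∘ Sum.inl)
        + (B.map Complex.ofReal * (B.map Complex.ofReal)ᵀ) *ᵥ (v ∘ Sum.inr)
        = μ • (v ∘ Sum.inl) := by
      ext i
      exact congrFun hv' (Sum.inl i)
    have h2 : (v ∘ Sum.inl) - (A.map Complex.ofReal)ᵀ *ᵥ (v ∘ Sum.inr)
        = μ • (v ∘ Sum.inr) := by
      ext i
      have := congrFun hv' (Sum.inr i)
      simpa [neg_mulVec, sub_eq_add_neg] using this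
    obtain ⟨hx, hy⟩ := ham_energy _ _ (conj A) (conj B) μ hst _ _ h1 h2
    have hy0 : v ∘ Sum.inr = 0 := by
      apply kalman_complex A B hK _ (-μ)
      · rw [← mulVec_transpose, neg_smul, ← h2, hx]
        simp
      · rw [← mulVec_transpose, hy]
    apply hv0
    ext (i | i)
    · exact congrFun hx i
    · exact congrFun hy0 i
  · unfold Matrix.IsComplexEigenvalue at hμ ⊢
    rw [Polynomial.IsRoot.def, eval_charpoly, ham_map] at hμ ⊢
    exact ham_symm _ _ (by simp [transpose_mul]) μ hμ

end
end

section
/- Let d, m ≥ 1, A ∈ ℝ^{d×d}, B ∈ ℝ^{d×m}, and let E₋, E₊ ∈ ℝ^{d×d} be symmetric matrices both solving the algebraic Riccati equation X A + Aᵀ X + X B Bᵀ X − I_d = 0, and assume E₊ − E₋ is invertible. Then (E₊ − E₋)(A + BBᵀE₊) + (A + BBᵀE₋)ᵀ(E₊ − E₋) = 0; consequently A + BBᵀE₊ = −(E₊ − E₋)^{−1}(A + BBᵀE₋)ᵀ(E₊ − E₋), so A + BBᵀE₊ is similar to −(A + BBᵀE₋)ᵀ, and hence μ ∈ ℂ is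 an eigenvalue of A + BBᵀE₊ if and only if −μ is an eigenvalue of A + BBᵀE₋. -/
open Matrix

noncomputable section

/-- if `E₋, E₊` are symmetric solutions of the algebraic Riccati equation
`XA + AᵀX + XBBᵀX − I = 0` and `E₊ − E₋` is invertible, then
`(E₊ − E₋)(A + BBᵀE₊) + (A + BBᵀE₋)ᵀ(E₊ − E₋) = 0`; consequently
`A + BBᵀE₊ = −(E₊ − E₋)⁻¹ (A + BBᵀE₋)ᵀ (E₊ − E₋)`, so `A + BBᵀE₊` is similar to
`−(A + BBᵀE₋)ᵀ`, and `μ` is an eigenvalue of `A + BBᵀE₊` iff `−μ` is an eigenvalue of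
`A + BBᵀE₋`. -/
theorem riccati_eigenvalue_reflection {d m : ℕ} (hd : 1 ≤ d) (hm : 1 ≤ m)
    (A : Matrix (Fin d) (Fin d) ℝ) (B : Matrix (Fin d) (Fin m) ℝ)
    (Eminus Eplus : Matrix (Fin d) (Fin d) ℝ)
    (hEm_symm : Eminus.IsSymm) (hEp_symm : Eplus.IsSymm)
    (hEm : Eminus * A + Aᵀ * Eminus + Eminus * B * Bᵀ * Eminus - 1 = 0)
    (hEp : Eplus * A + Aᵀ * Eplus + Eplus * B * Bᵀ * Eplus - 1 = 0)
    (hinv : IsUnit (Eplus - Eminus)) :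
    (Eplus - Eminus) * (A + B * Bᵀ * Eplus) + (A + B * Bᵀ * Eminus)ᵀ * (Eplus - Eminus) = 0 ∧
    A + B * Bᵀ * Eplus = -((Eplus - Eminus)⁻¹ * (A + B * Bᵀ * Eminus)ᵀ * (Eplus - Eminus)) ∧
    (∀ μ : ℂ, (A + B * Bᵀ * Eplus).IsComplexEigenvalue μ ↔
      (A + B * Bᵀ * Eminus).IsComplexEigenvalue (-μ)) := by
  have h1 : (Eplus - Eminus) * (A + B * Bᵀ * Eplus)
      + (A + B * Bᵀ * Eminus)ᵀ * (Eplus - Eminus) = 0 := by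
    have ht : (A + B * Bᵀ * Eminus)ᵀ = Aᵀ + Eminus * B * Bᵀ := by
      rw [transpose_add, transpose_mul, transpose_mul, transpose_transpose, hEm_symm.eq,
        Matrix.mul_assoc]
    rw [ht]
    have h := congrArg₂ (· - ·) hEp hEm
    simp only [sub_zero] at h
    rw [← h]
    simp only [Matrix.mul_add, Matrix.add_mul, Matrix.mul_sub, Matrix.sub_mul, Matrix.mul_assoc]
    abel
  have hdet : IsUnit (Eplus - Eminus).det := (Matrix.isUnit_iff_isUnit_det _).1 hinv
  refine ⟨h1, ?_, ?_⟩
  · have h2 := eq_neg_of_add_eq_zero_left h1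
    rw [Matrix.mul_assoc (Eplus - Eminus)⁻¹, ← Matrix.mul_neg, ← h2, Matrix.nonsing_inv_mul_cancel_left _ _ hdet]
  · intro μ
    generalize A + B * Bᵀ * Eplus = P at h1
    generalize A + B * Bᵀ * Eminus = Q at h1
    generalize Eplus - Eminus = D at h1 hdet
    unfold Matrix.IsComplexEigenvalue
    rw [Polynomial.IsRoot.def, Polynomial.IsRoot.def, Matrix.eval_charpoly, Matrix.eval_charpoly]
    have h3 : D.map Complex.ofRealHom * P.map Complex.ofRealHom
        + (Q.map Complex.ofRealHom)ᵀ * D.map Complex.ofRealHom = 0 := by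
      rw [← Matrix.transpose_map, ← Matrix.map_mul, ← Matrix.map_mul,
        ← Matrix.map_add _ (map_add Complex.ofRealHom), h1]
      exact Matrix.map_zero _ (map_zero _)
    have hD : (D.map Complex.ofRealHom).det ≠ 0 := by
      have h4 : (D.map Complex.ofRealHom).det = Complex.ofRealHom D.det :=
        (RingHom.map_det Complex.ofRealHom D).symm
      rw [h4]
      simpa using hdet.ne_zero
    change (scalar (Fin d) μ - P.map Complex.ofRealHom).det = 0 ↔
      (scalar (Fin d) (-μ) - Q.map Complex.ofRealHom).det = 0
    generalize P.map Complex.ofRealHom = P' at h3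
    generalize Q.map Complex.ofRealHom = Q' at h3
    generalize D.map Complex.ofRealHom = D' at h3 hD
    have h5 : D' * (scalar (Fin d) μ - P') = -(scalar (Fin d) (-μ) - Q')ᵀ * D' := by
      have h6 := eq_neg_of_add_eq_zero_left h3
      have h7 : D' * scalar (Fin d) μ = scalar (Fin d) μ * D' :=
        (Matrix.scalar_commute μ (fun _ => Commute.all _ _) D').eq.symm
      have h8 : (scalar (Fin d) μ)ᵀ = scalar (Fin d) μ := by simp
      rw [Matrix.mul_sub, h6, h7, map_neg, transpose_sub, transpose_neg, h8]
      simp only [Matrix.sub_mul, Matrix.neg_mul]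
      abel
    have h9 := congrArg Matrix.det h5
    rw [det_mul, det_mul, det_neg, det_transpose] at h9
    have hs : ((-1 : ℂ) ^ Fintype.card (Fin d)) ≠ 0 := pow_ne_zero _ (by norm_num)
    constructor
    · intro h
      rw [h, mul_zero] at h9
      simpa [hs, hD] using h9.symm
    · intro h
      rw [h] at h9
      simpa [hD] using h9

end
end

section
/- Let τ > 0, T₀ > 0, γ ∈ (0,1), and T ≥ 2(τ + T₀). Let g : [0,T] → [0,∞) be a function such that for every natural number n with 1 ≤ n ≤ (1/τ)(T/2 − T₀), one has g(t) ≤ (1/2)·γⁿ for all t ∈ [nτ, T − nτ]. Then, setting λ := (−ln γ)/(τ + T₀) > 0, for every t with τ + T₀ < t < T − (τ + T₀) one has g(t) ≤ (1/γ)·( e^{−λ t} + e^{−λ (T−t)} ). -/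
open Set Real

noncomputable section

/-- from geometric decay on nested subintervals to the double-arc exponential
estimate: if `g : [0,T] → [0,∞)` satisfies `g ≤ (1/2)γⁿ` on `[nτ, T − nτ]` for every
`1 ≤ n ≤ (1/τ)(T/2 − T₀)`, then with `λ := (−ln γ)/(τ + T₀) > 0` one has
`g(t) ≤ (1/γ)(e^{−λt} + e^{−λ(T−t)})` for all `τ + T₀ < t < T − (τ + T₀)`. -/
theorem geometric_decay_to_exponential_turnpike (τ T₀ γ T : ℝ)
    (hτ : 0 < τ) (hT₀ : 0 < T₀) (hγ₀ : 0 < γ) (hγ₁ : γ < 1)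
    (hT : 2 * (τ + T₀) ≤ T)
    (g : ℝ → ℝ) (hg_nonneg : ∀ t ∈ Set.Icc (0 : ℝ) T, 0 ≤ g t)
    (hg : ∀ n : ℕ, 1 ≤ n → (n : ℝ) ≤ (1 / τ) * (T / 2 - T₀) →
      ∀ t ∈ Set.Icc ((n : ℝ) * τ) (T - (n : ℝ) * τ), g t ≤ (1 / 2) * γ ^ n) :
    0 < (-Real.log γ) / (τ + T₀) ∧
    ∀ t : ℝ, τ + T₀ < t → t < T - (τ + T₀) →
      g t ≤ (1 / γ) *
        (Real.exp (-((-Real.log γ) / (τ + T₀)) * t) +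
          Real.exp (-((-Real.log γ) / (τ + T₀)) * (T - t))) := by
  have hA : 0 < τ + T₀ := by linarith
  have hlog : Real.log γ < 0 := Real.log_neg hγ₀ hγ₁
  refine ⟨div_pos (by linarith) hA, ?_⟩
  intro t ht1 ht2
  have key : ∀ s : ℝ, τ + T₀ < s → s ≤ t → s ≤ T - t →
      g t ≤ (1 / γ) * Real.exp (-((-Real.log γ) / (τ + T₀)) * s) := by
    intro s hs h1 h2
    have hspos : 0 ≤ s / (τ + T₀) := by
      apply div_nonneg <;> linarith
    have hn1 : 1 ≤ ⌊s / (τ + T₀)⌋₊ := by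
      apply Nat.le_floor
      rw [Nat.cast_one, le_div_iff₀ hA]
      linarith
    have hle := Nat.floor_le hspos
    have hlt := Nat.lt_floor_add_one (s / (τ + T₀))
    generalize ⌊s / (τ + T₀)⌋₊ = n at hn1 hle hlt
    have hn1' : (1 : ℝ) ≤ n := by exact_mod_cast hn1
    rw [le_div_iff₀ hA] at hle
    have hnT : T₀ ≤ n * T₀ := by nlinarith
    have hnτ : n * τ ≤ s - T₀ := by linarith
    have hb := hg n hn1 (by
      rw [one_div, inv_mul_eq_div, le_div_iff₀ hτ]
      linarith) t ⟨by linarith, by linarith⟩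
    have hpow : γ ^ (n + 1) ≤ Real.exp (-((-Real.log γ) / (τ + T₀)) * s) := by
      rw [← Real.exp_log (pow_pos hγ₀ (n + 1)), Real.log_pow]
      apply Real.exp_le_exp.mpr
      have e : -((-Real.log γ) / (τ + T₀)) * s = (s / (τ + T₀)) * Real.log γ := by
        ring
      rw [e]
      push_cast
      exact mul_le_mul_of_nonpos_right hlt.le hlog.le
    have hp : 0 < γ ^ n := pow_pos hγ₀ n
    have h3 : γ ^ n ≤ (1 / γ) * Real.exp (-((-Real.log γ) / (τ + T₀)) * s) := by
      rw [one_div, inv_mul_eq_div, le_div_iff₀ hγ₀, ← pow_succ]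
      exact hpow
    linarith
  have p1 : 0 < (1 / γ) * Real.exp (-((-Real.log γ) / (τ + T₀)) * t) := by positivity
  have p2 : 0 < (1 / γ) * Real.exp (-((-Real.log γ) / (τ + T₀)) * (T - t)) := by positivity
  rw [mul_add]
  rcases le_total t (T - t) with h | h
  · have := key t ht1 le_rfl h
    linarith
  · have := key (T - t) (by linarith) h le_rfl
    linarith

end
end
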